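/- Let k > 1/2 be real and ν := (−1 + i·√(4k² − 1))/2. Then as t → 1⁻ (t real), the function t ↦ P_ν(−t) − (sin(νπ)/π)·log(1 − t) converges to the finite limit cos(νπ) − (2/π)·sin(νπ)·( (1/2)·log 2 − γ_EM − Γ′(ν+1)/Γ(ν+1) ), where γ_EM is the Euler–Mascheroni constant and Γ is the complex Gamma function. In particular, P_ν(−t) has a logarithmic singularity as t → 1⁻. -/

import Mathlib

open Polynomial Filter Topology

/-- The Legendre function of the first kind of degree `ν`, defined by its
hypergeometric series. -/
noncomputable def legendreP (ν : ℂ) (z : ℂ) : ℂ :=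
  ∑' n : ℕ, ((ascPochhammer ℂ n).eval (-ν) * (ascPochhammer ℂ n).eval (ν + 1))
      / ((n.factorial : ℂ))^2 * ((1 - z) / 2)^n

/-!
At `z = -t` the series defining `P_ν` is `F(-ν, ν + 1; 1; x)` with `x = (1 + t) / 2 → 1`. Its
coefficients `u n` satisfy `n * u n → S := -sin (π ν) / π`, so `∑ S xⁿ / (n + 1)` accounts for the
logarithm and, by Abel's limit theorem, what remains tends to `∑ (u n - S / (n + 1))`.

This constant is found by perturbing the lower parameter `c = a + b` of `F(a, b; c; 1)` to `c + ε`.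
Gauss's theorem gives the perturbed sum as `G ε / ε` with
`G z = Γ(c + z) Γ(1 + z) / (Γ(a + z) Γ(b + z))` and `G 0 = S`, while another instance of it shows
that the comparison series with terms `S (c)ₙ / (c + ε)ₙ₊₁` has sum `S / ε`. Hence the constant is
`G' 0`, which for `a + b = 1` the reflection formula expresses through `γ` and the digamma function.
-/

open Complex

theorem tendsto_inv_GammaSeq (s : ℂ) :
    Tendsto (fun n : ℕ => (GammaSeq s n)⁻¹) atTop (𝓝 (Gamma s)⁻¹) := by
  by_cases hs : ∃ m : ℕ, s = -m
  · obtain ⟨m, rfl⟩ := hs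
    rw [Gamma_neg_nat_eq_zero, inv_zero]
    refine tendsto_const_nhds.congr' ?_
    filter_upwards [eventually_ge_atTop m] with n hn
    rw [GammaSeq, Finset.prod_eq_zero (Finset.mem_range_succ_iff.2 hn) (neg_add_cancel _),
      div_zero, inv_zero]
  · exact (GammaSeq_tendsto_Gamma s).inv₀ (Gamma_ne_zero (not_exists.1 hs))

theorem ascPochhammer_eval_eq_prod_range {R : Type*} [CommSemiring R] (s : R) (n : ℕ) :
    (ascPochhammer R n).eval s = ∏ j ∈ Finset.range n, (s + j) := by
  induction n with
  | zero => simp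
  | succ n ih => rw [ascPochhammer_succ_eval, ih, Finset.prod_range_succ]

theorem eventually_add_natCast_ne_zero (s : ℂ) : ∀ᶠ n : ℕ in atTop, s + n ≠ 0 := by
  by_cases hs : ∃ m : ℕ, s = -m
  · obtain ⟨m, rfl⟩ := hs
    filter_upwards [eventually_gt_atTop m] with n hn
    rw [neg_add_eq_sub, sub_ne_zero]
    exact_mod_cast hn.ne'
  · exact Eventually.of_forall fun n h => hs ⟨n, eq_neg_of_add_eq_zero_left h⟩

theorem tendsto_ascPochhammer_div_cpow_mul_factorial (s : ℂ) :
    Tendsto (fun n : ℕ => (ascPochhammer ℂ n).eval s / ((n : ℂ) ^ (s - 1) * n.factorial)) atTop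
      (𝓝 (Gamma s)⁻¹) := by
  have h := (tendsto_inv_GammaSeq s).mul (tendsto_natCast_div_add_atTop s)
  rw [mul_one] at h
  refine h.congr' ?_
  filter_upwards [eventually_add_natCast_ne_zero s, eventually_ne_atTop 0] with n hs hn
  have hn' : (n : ℂ) ≠ 0 := Nat.cast_ne_zero.2 hn
  rw [GammaSeq, Finset.prod_range_succ, ← ascPochhammer_eval_eq_prod_range,
    cpow_sub _ _ hn', cpow_one, add_comm (n : ℂ)]
  field_simp

theorem one_ne_neg_natCast (n : ℕ) : (1 : ℂ) ≠ -n := by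
  rw [ne_eq, eq_neg_iff_add_eq_zero, add_comm]
  exact n.cast_add_one_ne_zero

theorem ne_neg_natCast_of_re_pos {c : ℂ} (hc : 0 < c.re) (n : ℕ) : c ≠ -n := by
  rintro rfl
  rw [neg_re, natCast_re, neg_pos] at hc
  exact hc.not_ge n.cast_nonneg

theorem ascPochhammer_eval_mul_add {R : Type*} [CommSemiring R] (s : R) (n : ℕ) :
    (ascPochhammer R n).eval s * (s + n) = s * (ascPochhammer R n).eval (s + 1) := by
  rw [← ascPochhammer_succ_eval, ascPochhammer_succ_left]
  simp [eval_comp]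

theorem tendsto_cpow_mul_ascPochhammer_div (p q : ℂ) {r s : ℂ} (hr : ∀ n : ℕ, r ≠ -n)
    (hs : ∀ n : ℕ, s ≠ -n) :
    Tendsto (fun n : ℕ => (n : ℂ) ^ (r + s - p - q) *
        ((ascPochhammer ℂ n).eval p * (ascPochhammer ℂ n).eval q /
          ((ascPochhammer ℂ n).eval r * (ascPochhammer ℂ n).eval s))) atTop
      (𝓝 (Gamma r * Gamma s / (Gamma p * Gamma q))) := by
  have h := ((tendsto_ascPochhammer_div_cpow_mul_factorial p).mul
    (tendsto_ascPochhammer_div_cpow_mul_factorial q)).div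
    ((tendsto_ascPochhammer_div_cpow_mul_factorial r).mul
      (tendsto_ascPochhammer_div_cpow_mul_factorial s))
    (mul_ne_zero (inv_ne_zero (Gamma_ne_zero hr)) (inv_ne_zero (Gamma_ne_zero hs)))
  rw [← mul_inv, ← mul_inv, inv_div_inv] at h
  refine h.congr' ?_
  filter_upwards [eventually_ne_atTop 0] with n hn
  have hn' : (n : ℂ) ≠ 0 := Nat.cast_ne_zero.2 hn
  have hf : (n.factorial : ℂ) ≠ 0 := Nat.cast_ne_zero.2 n.factorial_ne_zero
  simp only [Pi.div_apply, cpow_sub _ _ hn', cpow_add _ _ hn', cpow_one]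
  field_simp

/-! ### Hypergeometric coefficients -/

local notation "hgCoeff" => ordinaryHypergeometricCoefficient

section Coefficients

variable {𝕂 : Type*} [Field 𝕂]

theorem add_natCast_ne_neg_natCast {c : 𝕂} (hc : ∀ n : ℕ, c ≠ -n) (m n : ℕ) : c + m ≠ -n := by
  intro h
  refine hc (m + n) ?_
  push_cast
  linear_combination h

theorem ascPochhammer_eval_ne_zero {c : 𝕂} (hc : ∀ n : ℕ, c ≠ -n) (n : ℕ) :
    (ascPochhammer 𝕂 n).eval c ≠ 0 := by
  rw [ne_eq, ascPochhammer_eval_eq_zero_iff]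
  rintro ⟨m, -, hm⟩
  exact hc m (by rw [hm, neg_neg])

theorem hgCoeff_eq_div (a b c : 𝕂) (n : ℕ) :
    hgCoeff a b c n = (ascPochhammer 𝕂 n).eval a * (ascPochhammer 𝕂 n).eval b /
      ((ascPochhammer 𝕂 n).eval c * n.factorial) := by
  rw [ordinaryHypergeometricCoefficient]
  ring

theorem hgCoeff_succ [CharZero 𝕂] (a b : 𝕂) {c : 𝕂} (hc : ∀ n : ℕ, c ≠ -n) (n : ℕ) :
    (n + 1) * (c + n) * hgCoeff a b c (n + 1) = (a + n) * (b + n) * hgCoeff a b c n := by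
  have hcn : c + n ≠ 0 := fun h => hc n (eq_neg_of_add_eq_zero_left h)
  rw [hgCoeff_eq_div, hgCoeff_eq_div, Nat.factorial_succ]
  simp only [ascPochhammer_succ_eval]
  push_cast
  field_simp

theorem add_mul_hgCoeff_add_one (a b : 𝕂) {c : 𝕂} (hc : ∀ n : ℕ, c ≠ -n) (n : ℕ) :
    (c + n) * hgCoeff a b (c + 1) n = c * hgCoeff a b c n := by
  have hcn : c + n ≠ 0 := fun h => hc n (eq_neg_of_add_eq_zero_left h)
  have hc0 : c ≠ 0 := by simpa using hc 0
  have hP : (ascPochhammer 𝕂 n).eval (c + 1) = (ascPochhammer 𝕂 n).eval c * (c + n) / c := by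
    rw [ascPochhammer_eval_mul_add, mul_div_cancel_left₀ _ hc0]
  rw [hgCoeff_eq_div, hgCoeff_eq_div, hP]
  field_simp

theorem hgCoeff_contiguous [CharZero 𝕂] (a b : 𝕂) {c : 𝕂} (hc : ∀ n : ℕ, c ≠ -n) (n : ℕ) :
    (c - a) * (c - b) * hgCoeff a b (c + 1) n - c * (c - a - b) * hgCoeff a b c n =
      c * ((n + 1 : ℕ) * hgCoeff a b c (n + 1) - n * hgCoeff a b c n) := by
  have hcn : c + n ≠ 0 := fun h => hc n (eq_neg_of_add_eq_zero_left h)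
  have h1 := hgCoeff_succ a b hc n
  have h2 := add_mul_hgCoeff_add_one a b hc n
  refine mul_left_cancel₀ hcn ?_
  push_cast
  linear_combination (c - a) * (c - b) * h2 - c * h1

theorem hgCoeff_add_eq_mul (a b : 𝕂) {c : 𝕂} (hc : ∀ n : ℕ, c ≠ -n) (z : 𝕂) (n : ℕ) :
    hgCoeff a b (c + z) n = (ascPochhammer 𝕂 n).eval c / (ascPochhammer 𝕂 n).eval (c + z) *
      hgCoeff a b c n := by
  have := ascPochhammer_eval_ne_zero hc n
  rw [hgCoeff_eq_div, hgCoeff_eq_div]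
  field_simp

end Coefficients

theorem tendsto_cpow_mul_hgCoeff (a b : ℂ) {c : ℂ} (hc : ∀ n : ℕ, c ≠ -n) :
    Tendsto (fun n : ℕ => (n : ℂ) ^ (c + 1 - a - b) * hgCoeff a b c n) atTop
      (𝓝 (Gamma c / (Gamma a * Gamma b))) := by
  have h := tendsto_cpow_mul_ascPochhammer_div a b hc one_ne_neg_natCast
  simpa only [Gamma_one, mul_one, ascPochhammer_eval_one, ← hgCoeff_eq_div] using h

theorem isBigO_hgCoeff (a b : ℂ) {c : ℂ} (hc : ∀ n : ℕ, c ≠ -n) :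
    hgCoeff a b c =O[atTop] fun n : ℕ => (n : ℝ) ^ ((a + b - c).re - 1) := by
  have hpow : (fun n : ℕ => (n : ℂ) ^ (a + b - c - 1)) =O[atTop]
      fun n : ℕ => (n : ℝ) ^ ((a + b - c).re - 1) := by
    refine .of_norm_eventuallyLE ?_
    filter_upwards [eventually_gt_atTop 0] with n hn
    rw [norm_natCast_cpow_of_pos hn, sub_re _ 1, one_re]
  refine (hpow.mul ((tendsto_cpow_mul_hgCoeff a b hc).isBigO_one ℝ)).congr' ?_ (by simp)
  filter_upwards [eventually_ne_atTop 0] with n hn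
  rw [← mul_assoc, ← cpow_add _ _ (Nat.cast_ne_zero.2 hn),
    show a + b - c - 1 + (c + 1 - a - b) = 0 by ring, cpow_zero, one_mul]

theorem summable_hgCoeff {a b c : ℂ} (hc : ∀ n : ℕ, c ≠ -n) (h : 0 < (c - a - b).re) :
    Summable (hgCoeff a b c) := by
  refine summable_of_isBigO_nat (Real.summable_nat_rpow.2 ?_) (isBigO_hgCoeff a b hc)
  simp only [sub_re, add_re] at h ⊢
  linarith

theorem tendsto_natCast_mul_hgCoeff {a b c : ℂ} (hc : ∀ n : ℕ, c ≠ -n)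
    (h : 0 < (c - a - b).re) :
    Tendsto (fun n : ℕ => n * hgCoeff a b c n) atTop (𝓝 0) := by
  have hcast : (fun n : ℕ => (n : ℂ)) =O[atTop] fun n : ℕ => (n : ℝ) :=
    .of_norm_eventuallyLE (.of_forall fun n => (norm_natCast n).le)
  refine (hcast.mul (isBigO_hgCoeff a b hc)).trans_tendsto ?_
  refine ((tendsto_rpow_neg_atTop h).comp tendsto_natCast_atTop_atTop).congr' ?_
  filter_upwards [eventually_gt_atTop 0] with n hn
  have hexp : -(c - a - b).re = 1 + ((a + b - c).re - 1) := by
    simp only [sub_re, add_re]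
    ring
  rw [Function.comp_apply, hexp, Real.rpow_add (Nat.cast_pos.2 hn), Real.rpow_one]

/-! ### Gauss's summation theorem -/

theorem hasSum_succ_sub_of_tendsto {E : Type*} [AddCommGroup E] [TopologicalSpace E]
    [IsTopologicalAddGroup E] [T2Space E] {f : ℕ → E} {L : E} (hf : Tendsto f atTop (𝓝 L))
    (hsum : Summable fun n => f (n + 1) - f n) :
    HasSum (fun n => f (n + 1) - f n) (L - f 0) :=
  hsum.hasSum_iff_tendsto_nat.2 <| by simpa only [Finset.sum_range_sub] using hf.sub_const (f 0)

theorem mul_tsum_hgCoeff {a b c : ℂ} (hc : ∀ n : ℕ, c ≠ -n) (h : 0 < (c - a - b).re) :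
    c * (c - a - b) * ∑' n, hgCoeff a b c n =
      (c - a) * (c - b) * ∑' n, hgCoeff a b (c + 1) n := by
  have hc1 : ∀ n : ℕ, c + 1 ≠ -n := mod_cast add_natCast_ne_neg_natCast hc 1
  have h1 : 0 < (c + 1 - a - b).re := by
    simp only [sub_re, add_re, one_re] at h ⊢
    linarith
  have hsum := ((summable_hgCoeff hc1 h1).hasSum.mul_left ((c - a) * (c - b))).sub
    ((summable_hgCoeff hc h).hasSum.mul_left (c * (c - a - b)))
  simp only [hgCoeff_contiguous a b hc] at hsum
  have hc0 : c ≠ 0 := by simpa using hc 0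
  have htel := (hasSum_succ_sub_of_tendsto (tendsto_natCast_mul_hgCoeff hc h)
    ((summable_mul_left_iff hc0).1 hsum.summable)).mul_left c
  rw [Nat.cast_zero, zero_mul, sub_zero, mul_zero] at htel
  exact (sub_eq_zero.1 (hsum.unique htel)).symm

theorem tsum_hgCoeff_eq_mul_tsum_add_natCast {a b c : ℂ} (hc : ∀ n : ℕ, c ≠ -n)
    (h : 0 < (c - a - b).re) (N : ℕ) :
    ∑' n, hgCoeff a b c n =
      (ascPochhammer ℂ N).eval (c - a) * (ascPochhammer ℂ N).eval (c - b) /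
        ((ascPochhammer ℂ N).eval c * (ascPochhammer ℂ N).eval (c - a - b)) *
      ∑' n, hgCoeff a b (c + N) n := by
  induction N with
  | zero => simp
  | succ N ih =>
    have hre : 0 < (c + N - a - b).re := by
      simp only [sub_re, add_re, natCast_re] at h ⊢
      linarith
    have hstep := mul_tsum_hgCoeff (add_natCast_ne_neg_natCast hc N) hre
    have hcN : c + N ≠ 0 := by simpa using add_natCast_ne_neg_natCast hc N 0
    have hsN : c + N - a - b ≠ 0 := fun h0 => hre.ne' (by rw [h0, zero_re])
    rw [ih, eq_div_of_mul_eq (mul_ne_zero hcN hsN) (mul_comm _ _ |>.trans hstep)]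
    simp only [ascPochhammer_succ_eval]
    push_cast
    rw [add_assoc c, sub_add_eq_add_sub c a, sub_add_eq_add_sub c b,
      show c - a - b + N = c + N - a - b by ring]
    field_simp

theorem norm_le_norm_add_ofReal {z : ℂ} (hz : 0 ≤ z.re) {x : ℝ} (hx : 0 ≤ x) : ‖z‖ ≤ ‖z + x‖ := by
  rw [norm_def, norm_def, normSq_apply, normSq_apply]
  refine Real.sqrt_le_sqrt ?_
  simp only [add_re, add_im, ofReal_re, ofReal_im, add_zero]
  nlinarith

theorem norm_ascPochhammer_eval_le_add_ofReal {c : ℂ} (hc : 0 ≤ c.re) {x : ℝ} (hx : 0 ≤ x)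
    (n : ℕ) : ‖(ascPochhammer ℂ n).eval c‖ ≤ ‖(ascPochhammer ℂ n).eval (c + x)‖ := by
  simp only [ascPochhammer_eval_eq_prod_range, norm_prod]
  refine Finset.prod_le_prod (fun _ _ => norm_nonneg _) fun j _ => ?_
  rw [add_right_comm]
  refine norm_le_norm_add_ofReal ?_ hx
  rw [add_re, natCast_re]
  positivity

theorem norm_hgCoeff_add_ofReal_le (a b : ℂ) {c : ℂ} (hc : 0 < c.re) {x : ℝ} (hx : 0 ≤ x)
    (n : ℕ) : ‖hgCoeff a b (c + x) n‖ ≤ ‖hgCoeff a b c n‖ := by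
  have hpos := norm_pos_iff.2 (ascPochhammer_eval_ne_zero (ne_neg_natCast_of_re_pos hc) n)
  have hfac := norm_pos_iff.2 (Nat.cast_ne_zero (R := ℂ).2 n.factorial_ne_zero)
  have hle := norm_ascPochhammer_eval_le_add_ofReal hc.le hx n
  simp only [hgCoeff_eq_div, norm_div, norm_mul]
  gcongr

theorem tendsto_hgCoeff_add_natCast (a b c : ℂ) (n : ℕ) :
    Tendsto (fun N : ℕ => hgCoeff a b (c + N) n) atTop (𝓝 (if n = 0 then 1 else 0)) := by
  rcases eq_or_ne n 0 with rfl | hn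
  · simp [ordinaryHypergeometricCoefficient]
  have hdeg : 0 < (ascPochhammer ℂ n).degree := by
    rw [← natDegree_pos_iff_degree_pos, ascPochhammer_natDegree]
    exact hn.bot_lt
  have hN : Tendsto (fun N : ℕ => ‖c + N‖) atTop atTop := by
    refine tendsto_atTop_mono (fun N => ?_)
      (tendsto_atTop_add_const_right _ (-‖c‖) tendsto_natCast_atTop_atTop)
    have := norm_sub_le (c + N) c
    rw [add_sub_cancel_left, norm_natCast] at this
    linarith
  have h := tendsto_inv₀_cobounded.comp
    (tendsto_norm_atTop_iff_cobounded.1 ((ascPochhammer ℂ n).tendsto_norm_atTop hdeg hN))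
  rw [if_neg hn]
  have h' := h.const_mul ((n.factorial : ℂ)⁻¹ * (ascPochhammer ℂ n).eval a *
    (ascPochhammer ℂ n).eval b)
  rw [mul_zero] at h'
  exact h'

theorem tendsto_tsum_hgCoeff_add_natCast {a b c : ℂ} (hc : ∀ n : ℕ, c ≠ -n)
    (h : 0 < (c - a - b).re) :
    Tendsto (fun N : ℕ => ∑' n, hgCoeff a b (c + N) n) atTop (𝓝 1) := by
  obtain ⟨M, hM⟩ := exists_nat_gt (-c.re)
  have hcM : 0 < (c + M).re := by
    rw [add_re, natCast_re]
    linarith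
  have hsM : 0 < (c + M - a - b).re := by
    simp only [sub_re, add_re, natCast_re] at h ⊢
    linarith
  rw [← tendsto_add_atTop_iff_nat M]
  have hlim : Tendsto (fun N : ℕ => ∑' n, hgCoeff a b (c + M + N) n) atTop
      (𝓝 (∑' n : ℕ, if n = 0 then 1 else 0)) :=
    tendsto_tsum_of_dominated_convergence
      (summable_hgCoeff (add_natCast_ne_neg_natCast hc M) hsM).norm
      (tendsto_hgCoeff_add_natCast a b (c + M))
      (.of_forall fun N n => mod_cast norm_hgCoeff_add_ofReal_le a b hcM N.cast_nonneg n)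
  simpa [add_assoc, add_comm] using hlim

theorem gauss_summation {a b c : ℂ} (hc : ∀ n : ℕ, c ≠ -n) (h : 0 < (c - a - b).re) :
    ∑' n, hgCoeff a b c n = Gamma c * Gamma (c - a - b) / (Gamma (c - a) * Gamma (c - b)) := by
  have hprod := tendsto_cpow_mul_ascPochhammer_div (c - a) (c - b) hc (ne_neg_natCast_of_re_pos h)
  simp only [show c + (c - a - b) - (c - a) - (c - b) = 0 by ring, cpow_zero, one_mul] at hprod
  have hlim := hprod.mul (tendsto_tsum_hgCoeff_add_natCast hc h)
  simp only [← tsum_hgCoeff_eq_mul_tsum_add_natCast hc h, mul_one] at hlim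
  exact tendsto_nhds_unique tendsto_const_nhds hlim

/-! ### Zero-balanced series -/

section DifferenceBounds

variable {E : Type*} [SeminormedAddCommGroup E]

theorem norm_limit_sub_le_of_norm_succ_sub_le {f : ℕ → E} {L : E} {g : ℕ → ℝ} {N : ℕ}
    (hf : Tendsto f atTop (𝓝 L)) (hg : Tendsto g atTop (𝓝 0))
    (hfg : ∀ n ≥ N, ‖f (n + 1) - f n‖ ≤ g n - g (n + 1)) {n : ℕ} (hn : N ≤ n) :
    ‖L - f n‖ ≤ g n := by
  have hpartial : ∀ m ≥ n, ‖f m - f n‖ ≤ g n - g m := fun m hm => by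
    induction m, hm using Nat.le_induction with
    | base => simp
    | succ m hm ih =>
      calc ‖f (m + 1) - f n‖ ≤ ‖f (m + 1) - f m‖ + ‖f m - f n‖ :=
            norm_sub_le_norm_sub_add_norm_sub ..
        _ ≤ (g m - g (m + 1)) + (g n - g m) := add_le_add (hfg m (hn.trans hm)) ih
        _ = g n - g (m + 1) := by ring
  refine le_of_tendsto_of_tendsto (hf.sub_const (f n)).norm ?_
    ((eventually_ge_atTop n).mono hpartial)
  simpa using hg.const_sub (g n)

theorem isBigO_sub_limit_of_isBigO_succ_sub {f : ℕ → E} {L : E} (hf : Tendsto f atTop (𝓝 L))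
    (h : (fun n => f (n + 1) - f n) =O[atTop] fun n : ℕ => ((n : ℝ) ^ 2)⁻¹) :
    (fun n => f n - L) =O[atTop] fun n : ℕ => (n : ℝ)⁻¹ := by
  obtain ⟨C, hC, hbound⟩ := h.exists_nonneg
  obtain ⟨N, hN⟩ := eventually_atTop.1 hbound.bound
  have hg : Tendsto (fun n : ℕ => 2 * C * (n : ℝ)⁻¹) atTop (𝓝 0) := by
    simpa using tendsto_inv_atTop_nhds_zero_nat.const_mul (2 * C)
  have hfg : ∀ n ≥ N + 1, ‖f (n + 1) - f n‖ ≤ 2 * C * (n : ℝ)⁻¹ - 2 * C * ((n + 1 : ℕ) : ℝ)⁻¹ := by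
    intro n hn
    have hn1 : (1 : ℝ) ≤ n := by exact_mod_cast (Nat.le_add_left 1 N).trans hn
    have hinv : ((n : ℝ) ^ 2)⁻¹ ≤ 2 * ((n : ℝ)⁻¹ - ((n + 1 : ℕ) : ℝ)⁻¹) := by
      push_cast
      field_simp
      linarith
    calc ‖f (n + 1) - f n‖ ≤ C * ‖((n : ℝ) ^ 2)⁻¹‖ := hN n (Nat.le_of_succ_le hn)
      _ = C * ((n : ℝ) ^ 2)⁻¹ := by rw [Real.norm_of_nonneg (by positivity)]
      _ ≤ C * (2 * ((n : ℝ)⁻¹ - ((n + 1 : ℕ) : ℝ)⁻¹)) := by gcongr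
      _ = 2 * C * (n : ℝ)⁻¹ - 2 * C * ((n + 1 : ℕ) : ℝ)⁻¹ := by ring
  refine .of_bound (2 * C) (eventually_atTop.2 ⟨N + 1, fun n hn => ?_⟩)
  rw [norm_sub_rev, norm_inv, Real.norm_natCast]
  exact norm_limit_sub_le_of_norm_succ_sub_le hf hg hfg hn

end DifferenceBounds

theorem isBigO_inv_add_natCast (c : ℂ) :
    (fun n : ℕ => (c + n)⁻¹) =O[atTop] fun n : ℕ => (n : ℝ)⁻¹ := by
  have hinv : (fun n : ℕ => (n : ℂ)⁻¹) =O[atTop] fun n : ℕ => (n : ℝ)⁻¹ :=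
    .of_norm_eventuallyLE (.of_forall fun n => by simp)
  refine (hinv.mul ((tendsto_natCast_div_add_atTop c).isBigO_one ℝ)).congr' ?_ (by simp)
  filter_upwards [eventually_ne_atTop 0] with n hn
  rw [add_comm (n : ℂ), ← mul_div_assoc, inv_mul_cancel₀ (Nat.cast_ne_zero.2 hn), one_div]

theorem hasSum_ascPochhammer_div {c : ℂ} (hc : 0 < c.re) {ε : ℝ} (hε : 0 < ε) :
    HasSum (fun n : ℕ => (ascPochhammer ℂ n).eval c / (ascPochhammer ℂ n).eval (c + ε) /
      (c + ε + n)) (ε : ℂ)⁻¹ := by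
  have hcε : 0 < (c + ε).re := add_pos hc hε
  have hcε0 : c + ε ≠ 0 := by simpa using ne_neg_natCast_of_re_pos hcε 0
  have hε0 : (ε : ℂ) ≠ 0 := ofReal_ne_zero.2 hε.ne'
  have hc1 : ∀ n : ℕ, c + ε + 1 ≠ -n :=
    mod_cast add_natCast_ne_neg_natCast (ne_neg_natCast_of_re_pos hcε) 1
  have hsub : c + ε + 1 - c - 1 = (ε : ℂ) := by ring
  have hre : 0 < (c + ε + 1 - c - 1).re := by rwa [hsub, ofReal_re]
  have hΓε := Gamma_ne_zero_of_re_pos (s := ε) hε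
  have hΓcε := Gamma_ne_zero_of_re_pos hcε
  have hgauss : (c + ε)⁻¹ * ∑' n, hgCoeff c 1 (c + ε + 1) n = (ε : ℂ)⁻¹ := by
    rw [gauss_summation hc1 hre, hsub, add_sub_cancel_right,
      show c + ε + 1 - c = (ε : ℂ) + 1 by ring, Gamma_add_one _ hcε0, Gamma_add_one _ hε0]
    field_simp
  rw [← hgauss]
  refine ((summable_hgCoeff hc1 hre).hasSum.mul_left (c + ε)⁻¹).congr_fun fun n => ?_
  have hf : (n.factorial : ℂ) ≠ 0 := Nat.cast_ne_zero.2 n.factorial_ne_zero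
  rw [hgCoeff_eq_div, ascPochhammer_eval_one, div_div, ascPochhammer_eval_mul_add]
  field_simp

theorem norm_div_sub_div_add_ofReal_le {w : ℂ} (hw : 0 < w.re) (S : ℂ) {ε : ℝ}
    (hε : ε ∈ Set.Icc 0 1) : ‖S / w - S / (w + ε)‖ ≤ ‖S‖ * ‖w⁻¹‖ ^ 2 := by
  have hw0 : w ≠ 0 := ne_zero_of_re_pos hw
  have hle := norm_le_norm_add_ofReal hw.le hε.1
  have hpos := norm_pos_iff.2 hw0
  have hwε : w + ε ≠ 0 := norm_pos_iff.1 (hpos.trans_le hle)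
  have heq : S / w - S / (w + ε) = S * w⁻¹ * ((w + ε)⁻¹ * ε) := by
    field_simp
    ring
  have hinv : ‖(w + ε)⁻¹ * ε‖ ≤ ‖w⁻¹‖ := by
    rw [norm_mul, norm_inv, norm_inv, Complex.norm_of_nonneg hε.1]
    exact (mul_le_of_le_one_right (by positivity) hε.2).trans (inv_anti₀ hpos hle)
  rw [heq, norm_mul, norm_mul, sq, ← mul_assoc]
  gcongr

theorem norm_ascPochhammer_div_mul_sub_le {c : ℂ} (hc : 0 < c.re) (S v : ℂ) {ε : ℝ}
    (hε : ε ∈ Set.Icc 0 1) (n : ℕ) :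
    ‖(ascPochhammer ℂ n).eval c / (ascPochhammer ℂ n).eval (c + ε) * (v - S / (c + ε + n))‖ ≤
      ‖v - S / (c + n)‖ + ‖S‖ * ‖(c + n)⁻¹‖ ^ 2 := by
  have hratio : ‖(ascPochhammer ℂ n).eval c / (ascPochhammer ℂ n).eval (c + ε)‖ ≤ 1 := by
    rw [norm_div]
    exact div_le_one_of_le₀ (norm_ascPochhammer_eval_le_add_ofReal hc.le hε.1 n) (norm_nonneg _)
  have hn : 0 < (c + n).re := add_pos_of_pos_of_nonneg hc n.cast_nonneg
  rw [norm_mul, add_right_comm]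
  calc _ ≤ ‖v - S / (c + n + ε)‖ := mul_le_of_le_one_left (norm_nonneg _) hratio
    _ ≤ ‖v - S / (c + n)‖ + ‖S / (c + n) - S / (c + n + ε)‖ :=
      norm_sub_le_norm_sub_add_norm_sub ..
    _ ≤ ‖v - S / (c + n)‖ + ‖S‖ * ‖(c + n)⁻¹‖ ^ 2 := by
      gcongr
      exact norm_div_sub_div_add_ofReal_le hn S hε

theorem tendsto_ascPochhammer_div_mul_sub {c : ℂ} (hc : ∀ n : ℕ, c ≠ -n) (S v : ℂ) (n : ℕ) :
    Tendsto (fun z : ℂ => (ascPochhammer ℂ n).eval c / (ascPochhammer ℂ n).eval (c + z) *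
      (v - S / (c + z + n))) (𝓝 0) (𝓝 (v - S / (c + n))) := by
  have hP := ascPochhammer_eval_ne_zero hc n
  have hn : c + n ≠ 0 := fun h => hc n (eq_neg_of_add_eq_zero_left h)
  have hcont : ContinuousAt (fun z : ℂ => (ascPochhammer ℂ n).eval c /
      (ascPochhammer ℂ n).eval (c + z) * (v - S / (c + z + n))) 0 := by
    fun_prop (disch := simp [hP, hn])
  simpa [hP] using hcont.tendsto

section ZeroBalanced

variable {a b : ℂ}

theorem tendsto_natCast_mul_hgCoeff_zeroBalanced (hab : ∀ n : ℕ, a + b ≠ -n) :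
    Tendsto (fun n : ℕ => n * hgCoeff a b (a + b) n) atTop
      (𝓝 (Gamma (a + b) / (Gamma a * Gamma b))) := by
  simpa [show a + b + 1 - a - b = 1 by ring] using tendsto_cpow_mul_hgCoeff a b hab

theorem isBigO_natCast_mul_hgCoeff_sub (hab : ∀ n : ℕ, a + b ≠ -n) :
    (fun n : ℕ => n * hgCoeff a b (a + b) n - Gamma (a + b) / (Gamma a * Gamma b)) =O[atTop]
      fun n : ℕ => (n : ℝ)⁻¹ := by
  refine isBigO_sub_limit_of_isBigO_succ_sub (tendsto_natCast_mul_hgCoeff_zeroBalanced hab) ?_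
  have hab1 : ∀ n : ℕ, a + b + 1 ≠ -n := mod_cast add_natCast_ne_neg_natCast hab 1
  have hab0 : a + b ≠ 0 := by simpa using hab 0
  refine ((isBigO_hgCoeff a b hab1).const_mul_left (a * b / (a + b))).congr (fun n => ?_)
    fun n => ?_
  · have h := hgCoeff_contiguous a b hab n
    rw [div_mul_eq_mul_div, div_eq_iff hab0]
    linear_combination h
  · rw [sub_add_cancel_left, neg_re, one_re, show (-1 - 1 : ℝ) = -2 by norm_num,
      Real.rpow_neg n.cast_nonneg, Real.rpow_two]

theorem summable_hgCoeff_sub (hab : ∀ n : ℕ, a + b ≠ -n) :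
    Summable fun n : ℕ => hgCoeff a b (a + b) n -
      Gamma (a + b) / (Gamma a * Gamma b) / (a + b + n) := by
  have hO := isBigO_hgCoeff a b hab
  simp only [sub_self, zero_re, zero_sub, Real.rpow_neg_one] at hO
  refine summable_of_isBigO_nat (Real.summable_nat_pow_inv.2 one_lt_two) ?_
  refine (((isBigO_natCast_mul_hgCoeff_sub hab).add (hO.const_mul_left (a + b))).mul
    (isBigO_inv_add_natCast (a + b))).congr (fun n => ?_) fun n => ?_
  · have hn : a + b + n ≠ 0 := fun h => hab n (eq_neg_of_add_eq_zero_left h)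
    field_simp
    ring
  · rw [← mul_inv, sq]

theorem tsum_hgCoeff_add_ofReal_sub_div (hab : 0 < (a + b).re) {ε : ℝ} (hε : 0 < ε) (S : ℂ) :
    ∑' n, hgCoeff a b (a + b + ε) n - S / ε =
      ∑' n : ℕ, (ascPochhammer ℂ n).eval (a + b) / (ascPochhammer ℂ n).eval (a + b + ε) *
        (hgCoeff a b (a + b) n - S / (a + b + ε + n)) := by
  have hre : 0 < (a + b + ε).re := add_pos hab hε
  have hsum : Summable (hgCoeff a b (a + b + ε)) := by
    refine summable_hgCoeff (ne_neg_natCast_of_re_pos hre) ?_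
    rwa [show a + b + ε - a - b = (ε : ℂ) by ring]
  have h := (hasSum_ascPochhammer_div hab hε).mul_left S
  rw [div_eq_mul_inv S, ← h.tsum_eq, ← hsum.tsum_sub h.summable]
  refine tsum_congr fun n => ?_
  rw [hgCoeff_add_eq_mul a b (ne_neg_natCast_of_re_pos hab)]
  ring

theorem tendsto_tsum_hgCoeff_add_ofReal_sub_div (hab : 0 < (a + b).re) :
    Tendsto (fun ε : ℝ => ∑' n, hgCoeff a b (a + b + ε) n -
        Gamma (a + b) / (Gamma a * Gamma b) / ε) (𝓝[>] 0)
      (𝓝 (∑' n : ℕ, (hgCoeff a b (a + b) n -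
        Gamma (a + b) / (Gamma a * Gamma b) / (a + b + n)))) := by
  have hneg := ne_neg_natCast_of_re_pos hab
  set S := Gamma (a + b) / (Gamma a * Gamma b)
  have hinv : Summable fun n : ℕ => ‖(a + b + n)⁻¹‖ ^ 2 :=
    summable_of_isBigO_nat (Real.summable_nat_pow_inv.2 one_lt_two)
      (((isBigO_inv_add_natCast (a + b)).norm_left.pow 2).congr_right fun n => inv_pow ..)
  have hofReal : Tendsto (fun ε : ℝ => (ε : ℂ)) (𝓝[>] 0) (𝓝 0) :=
    (continuous_ofReal.tendsto' 0 0 ofReal_zero).mono_left nhdsWithin_le_nhds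
  have hlim := tendsto_tsum_of_dominated_convergence
    ((summable_hgCoeff_sub hneg).norm.add (hinv.mul_left ‖S‖))
    (fun n => (tendsto_ascPochhammer_div_mul_sub hneg S (hgCoeff a b (a + b) n) n).comp hofReal)
    (mem_of_superset (Ioo_mem_nhdsGT zero_lt_one) fun ε hε n =>
      norm_ascPochhammer_div_mul_sub_le hab S _ (Set.Ioo_subset_Icc_self hε) n)
  refine hlim.congr' ?_
  filter_upwards [self_mem_nhdsWithin] with ε hε
  exact (tsum_hgCoeff_add_ofReal_sub_div hab hε S).symm

theorem tsum_hgCoeff_sub_eq_deriv (hab : 0 < (a + b).re) :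
    ∑' n : ℕ, (hgCoeff a b (a + b) n -
        Gamma (a + b) / (Gamma a * Gamma b) / (a + b + n)) =
      deriv (fun z => Gamma (a + b + z) * Gamma (1 + z) /
        (Gamma (a + z) * Gamma (b + z))) 0 := by
  set G := fun z => Gamma (a + b + z) * Gamma (1 + z) / (Gamma (a + z) * Gamma (b + z)) with hG
  have hG0 : G 0 = Gamma (a + b) / (Gamma a * Gamma b) := by simp [hG]
  have hdiff : DifferentiableAt ℂ G 0 := by
    simp only [hG, div_eq_mul_inv, mul_inv]
    have hab0 : DifferentiableAt ℂ Gamma (a + b + 0) :=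
      differentiableAt_Gamma _ (by rw [add_zero]; exact ne_neg_natCast_of_re_pos hab)
    have h10 : DifferentiableAt ℂ Gamma (1 + 0) :=
      differentiableAt_Gamma _ (by rw [add_zero]; exact one_ne_neg_natCast)
    have hinv (w : ℂ) : DifferentiableAt ℂ (fun z => (Gamma (w + z))⁻¹) 0 :=
      (differentiable_one_div_Gamma (w + 0)).comp 0 (by fun_prop)
    exact ((hab0.comp 0 (by fun_prop)).mul (h10.comp 0 (by fun_prop))).mul ((hinv a).mul (hinv b))
  have hslope := (hasDerivAt_iff_tendsto_slope_zero.1 hdiff.hasDerivAt.comp_ofReal).mono_left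
    (nhdsGT_le_nhdsNE 0)
  refine tendsto_nhds_unique (tendsto_tsum_hgCoeff_add_ofReal_sub_div hab) (hslope.congr' ?_)
  filter_upwards [self_mem_nhdsWithin] with ε (hε : 0 < ε)
  have hε0 : (ε : ℂ) ≠ 0 := ofReal_ne_zero.2 hε.ne'
  have hsub : a + b + ε - a - b = (ε : ℂ) := by ring
  have hre : 0 < (a + b + ε).re := add_pos hab hε
  rw [gauss_summation (ne_neg_natCast_of_re_pos hre) (by rwa [hsub, ofReal_re]), hsub,
    show a + b + ε - a = b + ε by ring, show a + b + ε - b = a + ε by ring, ← hG0, zero_add,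
    ofReal_zero, real_smul]
  simp only [hG]
  rw [add_comm 1 (ε : ℂ), Gamma_add_one _ hε0]
  push_cast
  field_simp

end ZeroBalanced

theorem tendsto_one_sub_mul_log_one_sub_div :
    Tendsto (fun x : ℝ => (1 - x) * Real.log (1 - x) / x) (𝓝[<] 1) (𝓝 0) := by
  have hmul : Tendsto (fun x : ℝ => (1 - x) * Real.log (1 - x)) (𝓝 1) (𝓝 0) :=
    (Real.continuous_mul_log.comp (continuous_const.sub continuous_id)).tendsto' 1 0 (by simp)
  have hdiv : Tendsto (fun x : ℝ => (1 - x) * Real.log (1 - x) / x) (𝓝 1) (𝓝 (0 / 1)) :=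
    hmul.div tendsto_id one_ne_zero
  simpa using hdiv.mono_left nhdsWithin_le_nhds

theorem tsum_mul_pow_add_mul_log {u : ℕ → ℂ} {S : ℂ}
    (hsum : Summable fun n : ℕ => u n - S / (1 + n)) {x : ℝ} (hx : x ∈ Set.Ioo 0 1) :
    ∑' n : ℕ, u n * (x : ℂ) ^ n + S * (Real.log (1 - x) : ℝ) =
      ∑' n : ℕ, (u n - S / (1 + n)) * (x : ℂ) ^ n -
        S * ((1 - x) * Real.log (1 - x) / x : ℝ) := by
  have hx0 : (x : ℂ) ≠ 0 := ofReal_ne_zero.2 hx.1.ne'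
  have hregular : Summable fun n : ℕ => (u n - S / (1 + n)) * (x : ℂ) ^ n := by
    refine .of_norm_bounded hsum.norm fun n => ?_
    rw [norm_mul, norm_pow, Complex.norm_of_nonneg hx.1.le]
    exact mul_le_of_le_one_right (norm_nonneg _) (pow_le_one₀ hx.1.le hx.2.le)
  have habs : |x| < 1 := by rw [abs_of_pos hx.1]; exact hx.2
  have hlog := (hasSum_ofReal.2 (Real.hasSum_pow_div_log_of_abs_lt_one habs)).mul_left (S / x)
  have hseries : HasSum (fun n : ℕ => u n * (x : ℂ) ^ n)
      (∑' n : ℕ, (u n - S / (1 + n)) * (x : ℂ) ^ n + S / x * ((-Real.log (1 - x) : ℝ) : ℂ)) := by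
    refine (hregular.hasSum.add hlog).congr_fun fun n => ?_
    rw [add_comm (1 : ℂ)]
    push_cast
    field_simp
    ring
  rw [hseries.tsum_eq]
  push_cast
  field_simp
  ring

theorem tendsto_tsum_mul_pow_add_mul_log {u : ℕ → ℂ} {S : ℂ}
    (hsum : Summable fun n : ℕ => u n - S / (1 + n)) :
    Tendsto (fun x : ℝ => ∑' n : ℕ, u n * (x : ℂ) ^ n + S * (Real.log (1 - x) : ℝ)) (𝓝[<] 1)
      (𝓝 (∑' n : ℕ, (u n - S / (1 + n)))) := by
  have habel := tendsto_map'_iff.1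
    (tendsto_tsum_powerSeries_nhdsWithin_lt hsum.hasSum.tendsto_sum_nat)
  have hvanish := ((continuous_ofReal.tendsto 0).comp
    tendsto_one_sub_mul_log_one_sub_div).const_mul S
  have hlim := habel.sub hvanish
  rw [ofReal_zero, mul_zero, sub_zero] at hlim
  refine hlim.congr' ?_
  filter_upwards [Ioo_mem_nhdsLT zero_lt_one] with x hx
  exact (tsum_mul_pow_add_mul_log hsum hx).symm

/-! ### Legendre functions -/

theorem inv_Gamma_one_sub {w : ℂ} (hw : Gamma w ≠ 0) :
    (Gamma (1 - w))⁻¹ = Gamma w * sin (Real.pi * w) / Real.pi := by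
  rw [← mul_div_assoc', ← inv_div (Real.pi : ℂ), ← Gamma_mul_Gamma_one_sub, mul_inv,
    mul_inv_cancel_left₀ hw]

theorem Gamma_quotient_one_sub_eventuallyEq {b : ℂ} (hb : ∀ n : ℕ, b ≠ -n) :
    (fun z => Gamma (1 + z) * Gamma (1 + z) / (Gamma (1 - b + z) * Gamma (b + z))) =ᶠ[𝓝 0]
      fun z => Gamma (1 + z) * Gamma (1 + z) *
        (Gamma (b - z) * sin (Real.pi * (b - z)) / Real.pi) / Gamma (b + z) := by
  have hcont : ContinuousAt (fun z => Gamma (b - z)) 0 :=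
    ContinuousAt.comp' (by simpa using (differentiableAt_Gamma b hb).continuousAt) (by fun_prop)
  filter_upwards [hcont.eventually_ne (by simpa using Gamma_ne_zero hb)] with z hz
  rw [← inv_Gamma_one_sub hz, sub_sub_eq_add_sub, sub_add_eq_add_sub]
  ring

theorem deriv_Gamma_quotient_one_sub {b : ℂ} (hb : ∀ n : ℕ, b ≠ -n) :
    deriv (fun z => Gamma (1 + z) * Gamma (1 + z) / (Gamma (1 - b + z) * Gamma (b + z))) 0 =
      -cos (Real.pi * b) - 2 * sin (Real.pi * b) / Real.pi *
        (Real.eulerMascheroniConstant + deriv Gamma b / Gamma b) := by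
  have hΓ := Gamma_ne_zero hb
  have hΓb := differentiableAt_Gamma b hb
  have hone : HasDerivAt (fun z : ℂ => Gamma (1 + z)) (-Real.eulerMascheroniConstant) 0 :=
    HasDerivAt.comp_const_add 1 0 (by rw [add_zero]; exact hasDerivAt_Gamma_one)
  have hplus : HasDerivAt (fun z => Gamma (b + z)) (deriv Gamma b) 0 :=
    HasDerivAt.comp_const_add b 0 (by rw [add_zero]; exact hΓb.hasDerivAt)
  have hminus : HasDerivAt (fun z => Gamma (b - z)) (-deriv Gamma b) 0 :=
    HasDerivAt.comp_const_sub b 0 (by rw [sub_zero]; exact hΓb.hasDerivAt)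
  have hsin : HasDerivAt (fun z => sin (Real.pi * (b - z)))
      (-(Real.pi * cos (Real.pi * b))) 0 := by
    have := ((hasDerivAt_id (0 : ℂ)).const_sub b).const_mul (Real.pi : ℂ)
    simpa [mul_comm] using this.csin
  have hprod := ((hone.mul hone).mul ((hminus.mul hsin).div_const (Real.pi : ℂ))).div hplus
    (by rwa [add_zero])
  rw [(Gamma_quotient_one_sub_eventuallyEq hb).deriv_eq]
  refine hprod.deriv.trans ?_
  simp only [Pi.mul_apply, add_zero, sub_zero, Gamma_one]
  field_simp
  ring

theorem legendreP_neg (ν z : ℂ) :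
    legendreP ν (-z) = ∑' n, hgCoeff (-ν) (ν + 1) 1 n * ((1 + z) / 2) ^ n := by
  refine tsum_congr fun n => ?_
  rw [hgCoeff_eq_div, ascPochhammer_eval_one, sq, sub_neg_eq_add]

theorem Gamma_one_div_Gamma_neg_mul_Gamma_add_one {ν : ℂ} (hν : ∀ n : ℕ, ν + 1 ≠ -n) :
    Gamma 1 / (Gamma (-ν) * Gamma (ν + 1)) = -sin (ν * Real.pi) / Real.pi := by
  have hΓ := Gamma_ne_zero hν
  have h := inv_Gamma_one_sub hΓ
  rw [sub_add_cancel_right, mul_add_one, sin_add_pi, mul_comm (Real.pi : ℂ)] at h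
  rw [Gamma_one, one_div, mul_inv, h]
  field_simp

theorem summable_legendre_hgCoeff_sub {ν : ℂ} (hν : ∀ n : ℕ, ν + 1 ≠ -n) :
    Summable fun n : ℕ =>
      hgCoeff (-ν) (ν + 1) 1 n - -sin (ν * Real.pi) / Real.pi / (1 + n) := by
  have h1 : -ν + (ν + 1) = 1 := neg_add_cancel_left ν 1
  have h := summable_hgCoeff_sub (a := -ν) (b := ν + 1) (by rw [h1]; exact one_ne_neg_natCast)
  rwa [h1, Gamma_one_div_Gamma_neg_mul_Gamma_add_one hν] at h

theorem tsum_legendre_hgCoeff_sub {ν : ℂ} (hν : ∀ n : ℕ, ν + 1 ≠ -n) :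
    ∑' n : ℕ, (hgCoeff (-ν) (ν + 1) 1 n - -sin (ν * Real.pi) / Real.pi / (1 + n)) =
      cos (ν * Real.pi) + 2 * sin (ν * Real.pi) / Real.pi *
        (Real.eulerMascheroniConstant + deriv Gamma (ν + 1) / Gamma (ν + 1)) := by
  have h1 : -ν + (ν + 1) = 1 := neg_add_cancel_left ν 1
  have h := tsum_hgCoeff_sub_eq_deriv (a := -ν) (b := ν + 1) (by rw [h1]; exact one_pos)
  have hderiv := deriv_Gamma_quotient_one_sub hν
  rw [sub_add_cancel_right, mul_add_one, sin_add_pi, cos_add_pi,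
    mul_comm (Real.pi : ℂ)] at hderiv
  rw [h1, Gamma_one_div_Gamma_neg_mul_Gamma_add_one hν, hderiv] at h
  rw [h]
  ring

theorem legendreP_log_singularity_general (ν : ℂ) (hν : ∀ n : ℕ, ν + 1 ≠ -n) :
    Tendsto
      (fun t : ℝ =>
        legendreP ν (-(t : ℂ)) -
          (Complex.sin (ν * Real.pi) / (Real.pi : ℂ)) * ((Real.log (1 - t) : ℝ) : ℂ))
      (nhdsWithin 1 (Set.Iio 1))
      (nhds (Complex.cos (ν * Real.pi) -
        (2 / (Real.pi : ℂ)) * Complex.sin (ν * Real.pi) *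
          (((1/2 : ℝ) * Real.log 2 - Real.eulerMascheroniConstant : ℝ) -
            deriv Complex.Gamma (ν + 1) / Complex.Gamma (ν + 1)))) := by
  have hx : Tendsto (fun t : ℝ => (1 + t) / 2) (𝓝[<] 1) (𝓝[<] 1) := by
    refine tendsto_nhdsWithin_iff.2 ⟨?_, ?_⟩
    · have : ContinuousAt (fun t : ℝ => (1 + t) / 2) 1 := by fun_prop
      simpa using this.tendsto.mono_left nhdsWithin_le_nhds
    · filter_upwards [self_mem_nhdsWithin] with t (ht : t < 1)
      change (1 + t) / 2 < 1
      linarith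
  have hlim := ((tendsto_tsum_mul_pow_add_mul_log (summable_legendre_hgCoeff_sub hν)).comp
    hx).sub_const (Complex.sin (ν * Real.pi) / Real.pi * (Real.log 2 : ℝ))
  rw [tsum_legendre_hgCoeff_sub hν] at hlim
  convert! hlim.congr' ?_ using 2
  · push_cast
    ring
  · filter_upwards [self_mem_nhdsWithin] with t (ht : t < 1)
    have hlog : Real.log (1 - (1 + t) / 2) = Real.log (1 - t) - Real.log 2 := by
      rw [← Real.log_div (sub_pos.2 ht).ne' two_ne_zero]
      ring_nf
    rw [Function.comp_apply, hlog, legendreP_neg]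
    push_cast
    ring

theorem legendreP_log_singularity (k : ℝ) (hk : 1/2 < k) :
    let ν : ℂ := (-1 + Complex.I * Real.sqrt (4*k^2 - 1)) / 2
    Tendsto
      (fun t : ℝ =>
        legendreP ν (-(t : ℂ)) -
          (Complex.sin (ν * Real.pi) / (Real.pi : ℂ)) * ((Real.log (1 - t) : ℝ) : ℂ))
      (nhdsWithin 1 (Set.Iio 1))
      (nhds (Complex.cos (ν * Real.pi) -
        (2 / (Real.pi : ℂ)) * Complex.sin (ν * Real.pi) *
          (((1/2 : ℝ) * Real.log 2 - Real.eulerMascheroniConstant : ℝ) -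
            deriv Complex.Gamma (ν + 1) / Complex.Gamma (ν + 1)))) :=
  legendreP_log_singularity_general _ <| ne_neg_natCast_of_re_pos <| by norm_num
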